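/- arXiv:2308.16146 — 2 statements merged into one kernel-verified Lean document; each statement's English description precedes it below -/
import Mathlib

section
/- Let n ≥ 3 and let Q ∈ O(n) be PP. Then the maximal Gaussian-elimination intermediate entry satisfies max_{1≤k≤n} max_{k≤i,j≤n} |Q^{(k)}_{ij}| ≤ √(2α_{n−1}), with equality if and only if Q = D Q_n D̃ for some diagonal matrices D, D̃ with diagonal entries ±1, where Q_n = Q̂ D̂^{−1/2}. -/
open Matrix Filter

/-- Gaussian-elimination intermediate entry `A^{(k+1)}_{ij}` (0-indexed step `k`):
the Schur complement of the leading `k × k` block. -/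
noncomputable def geEntry {n : ℕ} (A : Matrix (Fin n) (Fin n) ℝ) (k i j : Fin n) : ℝ :=
  A i j - ∑ a : Fin k.val, ∑ b : Fin k.val,
    A i (Fin.castLE k.isLt.le a) *
      (A.submatrix (Fin.castLE k.isLt.le) (Fin.castLE k.isLt.le))⁻¹ a b *
      A (Fin.castLE k.isLt.le b) j

/-- `A` is PP: at each GE step the pivot dominates its column. -/
def IsPP {n : ℕ} (A : Matrix (Fin n) (Fin n) ℝ) : Prop :=
  ∀ k i : Fin n, k ≤ i → |geEntry A k i k| ≤ |geEntry A k k k|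

/-- `A` is CP: at each GE step the pivot dominates the whole untriangularized block. -/
def IsCP {n : ℕ} (A : Matrix (Fin n) (Fin n) ℝ) : Prop :=
  ∀ k i j : Fin n, k ≤ i → k ≤ j → |geEntry A k i j| ≤ |geEntry A k k k|

/-- Maximal absolute Gaussian-elimination intermediate entry of `A`. -/
noncomputable def maxGE {n : ℕ} (A : Matrix (Fin n) (Fin n) ℝ) : ℝ :=
  ⨆ k : Fin n, ⨆ i : {i : Fin n // k ≤ i}, ⨆ j : {j : Fin n // k ≤ j},
    |geEntry A k i.1 j.1|

/-- `max_{i,j} |A_{ij}|`. -/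
noncomputable def maxAbs {n : ℕ} (A : Matrix (Fin n) (Fin n) ℝ) : ℝ :=
  ⨆ i, ⨆ j, |A i j|

/-- Growth factor `ρ(A)`. -/
noncomputable def growth {n : ℕ} (A : Matrix (Fin n) (Fin n) ℝ) : ℝ :=
  maxGE A / maxAbs A

/-- `P` is a permutation matrix. -/
def IsPermMatrix {n : ℕ} (P : Matrix (Fin n) (Fin n) ℝ) : Prop :=
  ∃ σ : Equiv.Perm (Fin n), P = σ.permMatrix ℝ

/-- `D` is a diagonal matrix with diagonal entries `±1`. -/
def IsSignDiag {n : ℕ} (D : Matrix (Fin n) (Fin n) ℝ) : Prop :=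
  (∀ i j, i ≠ j → D i j = 0) ∧ (∀ i, D i i = 1 ∨ D i i = -1)

/-- Wilkinson's unipotent lower triangular matrix `L_n`. -/
def Lmat (n : ℕ) : Matrix (Fin n) (Fin n) ℝ :=
  fun i j => if i = j then 1 else if j < i then -1 else 0

/-- Wilkinson's upper triangular factor `U_n`. -/
def Umat (n : ℕ) : Matrix (Fin n) (Fin n) ℝ :=
  fun i j => if (j : ℕ) = n - 1 then 2 ^ (i : ℕ) else if i = j then 1 else 0

/-- Wilkinson's worst-case GEPP growth matrix `A_n`. -/
def Amat (n : ℕ) : Matrix (Fin n) (Fin n) ℝ :=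
  fun i j =>
    if (j : ℕ) = n - 1 ∧ (i : ℕ) < n - 1 then 1
    else if i = j then 1
    else if j < i then -1
    else 0

/-- `α_j = 1 + (2/3)(4^{j-1} - 1)` (1-indexed `j`). -/
noncomputable def alpha (j : ℕ) : ℝ := 1 + 2 / 3 * (4 ^ (j - 1) - 1)

/-- The unnormalized orthogonal factor `Q̂` (columns of `Qhat n` are, 1-indexed,
the columns described in the paper; here 0-indexed). -/
noncomputable def Qhat (n : ℕ) : Matrix (Fin n) (Fin n) ℝ :=
  fun i j =>
    if (j : ℕ) = n - 1 then
      if (i : ℕ) = n - 1 then 1 else 2 ^ (n - 2 - (i : ℕ))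
    else if (j : ℕ) = n - 2 then
      if (i : ℕ) = n - 2 then 1 else if (i : ℕ) = n - 1 then -1 else 0
    else if (i : ℕ) < (j : ℕ) then
      -((n : ℝ) - (j : ℕ) - 2) * 2 ^ ((j : ℕ) - (i : ℕ) - 1)
    else if (i : ℕ) = (j : ℕ) then
      ((n : ℝ) - (j : ℕ) - 1) * (alpha ((j : ℕ) + 1) - 1) + 1
    else -alpha ((j : ℕ) + 1)

/-- The diagonal normalization matrix `D̂`. -/
noncomputable def Dhat (n : ℕ) : Matrix (Fin n) (Fin n) ℝ :=
  Matrix.diagonal fun j =>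
    if (j : ℕ) = 0 then (n : ℝ)
    else if (j : ℕ) = n - 2 then 2
    else if (j : ℕ) = n - 1 then 2 * alpha (n - 1)
    else ((n : ℝ) - (j : ℕ) - 1) ^ 2 * (alpha ((j : ℕ) + 1) - 1) ^ 2 *
        (2 * alpha ((j : ℕ) + 1) - 1) / (2 * alpha ((j : ℕ) + 1) - 2) +
      ((n : ℝ) - (j : ℕ) - 1) * (alpha ((j : ℕ) + 1) ^ 2 + alpha ((j : ℕ) + 1) - 1) +
      2 * alpha (j : ℕ)

/-- `Q_n = Q̂ D̂^{-1/2}`, the orthogonal QR factor of `L_n`. -/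
noncomputable def Qmat (n : ℕ) : Matrix (Fin n) (Fin n) ℝ :=
  Qhat n * Matrix.diagonal fun m => (Real.sqrt (Dhat n m m))⁻¹

/-- Frobenius norm. -/
noncomputable def frobNorm {n : ℕ} (M : Matrix (Fin n) (Fin n) ℝ) : ℝ :=
  Real.sqrt (∑ i, ∑ j, M i j ^ 2)

/-- The Givens rotation `G(θ, i, j)`. -/
noncomputable def givens (n : ℕ) (θ : ℝ) (i j : Fin n) : Matrix (Fin n) (Fin n) ℝ :=
  fun a b =>
    if a = i ∧ b = i then Real.cos θ
    else if a = j ∧ b = j then Real.cos θ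
    else if a = i ∧ b = j then -Real.sin θ
    else if a = j ∧ b = i then Real.sin θ
    else if a = b then 1 else 0

/-- The ordered product of Givens rotations `Q(θ) = ∏_{i=1}^{n-1} ∏_{j=i+1}^n G(θ_{ij}, i, j)`. -/
noncomputable def QofTheta (n : ℕ) (θ : Fin n → Fin n → ℝ) : Matrix (Fin n) (Fin n) ℝ :=
  ((List.finRange n).map fun i =>
    (((List.finRange n).filter fun j => decide (i < j)).map fun j =>
      givens n (θ i j) i j).prod).prod

/-! Partial pivoting bounds all multipliers by `1`. Row `i` of the `k`-th Schur complement of `Q`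
is row `i` of `Q` minus a combination of the first `k` rows, and backward substitution bounds the
coefficients of that combination by `1, 2, …, 2 ^ (k - 1)`. As the rows of `Q` are orthonormal, the
row of the Schur complement has squared norm at most `1 + ∑ b < k, 4 ^ b = (4 ^ k + 2) / 3`, which
is `2 α_{n-1}` at the last step `k = n - 1`.

Equality forces every coefficient to be extremal, hence all multipliers below the diagonal to be
those of Wilkinson's matrix `Lmat n` up to a sign change `S * Lmat n * S`. An orthogonal matrix with
lower factor `Lmat n` is determined up to the signs of its columns.
-/

/-- The leading `k × k` block of `A`, for a 0-indexed elimination step `k`. -/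
def leadingBlock {n : ℕ} (A : Matrix (Fin n) (Fin n) ℝ) (k : Fin n) : Matrix (Fin k) (Fin k) ℝ :=
  A.submatrix (Fin.castLE k.isLt.le) (Fin.castLE k.isLt.le)

/-- The first `k` rows of `A`. -/
def leadingRows {n : ℕ} (A : Matrix (Fin n) (Fin n) ℝ) (k : Fin n) : Matrix (Fin k) (Fin n) ℝ :=
  A.submatrix (Fin.castLE k.isLt.le) id

/-- The first `k` columns of `A`. -/
def leadingCols {n : ℕ} (A : Matrix (Fin n) (Fin n) ℝ) (k : Fin n) : Matrix (Fin n) (Fin k) ℝ :=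
  A.submatrix id (Fin.castLE k.isLt.le)

/-- Row `i` holds the coefficients of the combination of the first `k` rows of `A` that Gaussian
elimination subtracts from row `i` to reach step `k`. -/
noncomputable def elimCoeff {n : ℕ} (A : Matrix (Fin n) (Fin n) ℝ) (k : Fin n) :
    Matrix (Fin n) (Fin k) ℝ :=
  leadingCols A k * (leadingBlock A k)⁻¹

/-- `A` agrees with the product of a unit lower and a nonsingular upper triangular factor on its
first `k` rows and columns; nothing is asserted about the remaining block. -/
structure IsPartialLU {n : ℕ} (A L U : Matrix (Fin n) (Fin n) ℝ) (k : Fin n) : Prop where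
  lower : L.IsLowerTriangular
  upper : U.IsUpperTriangular
  lower_diag : ∀ q < k, L q q = 1
  upper_diag : ∀ q < k, U q q ≠ 0
  mul_apply : ∀ i j, i < k ∨ j < k → (L * U) i j = A i j

section Elimination

variable {n : ℕ} {A L U : Matrix (Fin n) (Fin n) ℝ} {k i j : Fin n}

theorem geEntry_eq_sub_mul (A : Matrix (Fin n) (Fin n) ℝ) (k : Fin n) :
    Matrix.of (geEntry A k) = A - elimCoeff A k * leadingRows A k := by
  ext i j
  simp only [of_apply, geEntry, Matrix.sub_apply, Matrix.mul_apply, elimCoeff, leadingCols,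
    leadingBlock, leadingRows, submatrix_apply, id_eq, Finset.sum_mul]
  rw [Finset.sum_comm]

theorem geEntry_eq_mul (A : Matrix (Fin n) (Fin n) ℝ) (k : Fin n) :
    Matrix.of (geEntry A k) = (1 - elimCoeff A k * leadingRows 1 k) * A := by
  have hrows : leadingRows 1 k * A = leadingRows A k := one_submatrix_mul _ (.refl _) A
  rw [geEntry_eq_sub_mul, Matrix.sub_mul, Matrix.one_mul, Matrix.mul_assoc, hrows]

theorem sum_castLE_eq_sum_Iio (k : Fin n) (f : Fin n → ℝ) :
    ∑ b : Fin k, f (Fin.castLE k.isLt.le b) = ∑ q ∈ Finset.Iio k, f q := by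
  refine Finset.sum_bij (fun b _ ↦ Fin.castLE k.isLt.le b) (by simp [Fin.lt_def]) (by simp) ?_
    (by simp)
  exact fun q hq ↦ ⟨⟨q, Fin.lt_def.mp (Finset.mem_Iio.mp hq)⟩, Finset.mem_univ _, rfl⟩

theorem leadingCols_mul_leadingRows_apply (L U : Matrix (Fin n) (Fin n) ℝ) (k i j : Fin n) :
    (leadingCols L k * leadingRows U k) i j = ∑ q ∈ Finset.Iio k, L i q * U q j :=
  sum_castLE_eq_sum_Iio k fun q ↦ L i q * U q j

theorem mul_apply_eq_sum_Iio (hL : L.IsLowerTriangular) (hU : U.IsUpperTriangular)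
    (h : i < k ∨ j < k) : (L * U) i j = ∑ q ∈ Finset.Iio k, L i q * U q j := by
  rw [Matrix.mul_apply]
  refine (Finset.sum_subset (Finset.subset_univ _) fun q _ hq ↦ ?_).symm
  have hkq : k ≤ q := by simpa using hq
  rcases h with h | h
  · rw [hL (show i < q from h.trans_le hkq), zero_mul]
  · rw [hU (show j < q from h.trans_le hkq), mul_zero]

namespace IsPartialLU

theorem leadingRows_eq (h : IsPartialLU A L U k) :
    leadingRows A k = leadingBlock L k * leadingRows U k := by
  ext b j
  have hb : Fin.castLE k.isLt.le b < k := b.isLt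
  change A (Fin.castLE k.isLt.le b) j =
    (leadingCols L k * leadingRows U k) (Fin.castLE k.isLt.le b) j
  rw [leadingCols_mul_leadingRows_apply, ← mul_apply_eq_sum_Iio h.lower h.upper (.inl hb),
    h.mul_apply _ _ (.inl hb)]

theorem leadingCols_eq (h : IsPartialLU A L U k) :
    leadingCols A k = leadingCols L k * leadingBlock U k := by
  ext i b
  have hb : Fin.castLE k.isLt.le b < k := b.isLt
  change A i (Fin.castLE k.isLt.le b) =
    (leadingCols L k * leadingRows U k) i (Fin.castLE k.isLt.le b)
  rw [leadingCols_mul_leadingRows_apply, ← mul_apply_eq_sum_Iio h.lower h.upper (.inr hb),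
    h.mul_apply _ _ (.inr hb)]

theorem leadingBlock_eq (h : IsPartialLU A L U k) :
    leadingBlock A k = leadingBlock L k * leadingBlock U k := by
  ext a b
  exact congrFun (congrFun h.leadingRows_eq a) (Fin.castLE k.isLt.le b)

theorem isUnit_det_lower (h : IsPartialLU A L U k) : IsUnit (leadingBlock L k).det := by
  have hlower : (leadingBlock L k).IsLowerTriangular := fun _ _ hab ↦ h.lower hab
  rw [det_of_isLowerTriangular _ hlower]
  simp [leadingBlock, fun b : Fin k ↦ h.lower_diag (Fin.castLE k.isLt.le b) b.isLt]

theorem isUnit_det_upper (h : IsPartialLU A L U k) : IsUnit (leadingBlock U k).det := by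
  have hupper : (leadingBlock U k).IsUpperTriangular := fun _ _ hab ↦ h.upper hab
  rw [det_of_isUpperTriangular hupper, isUnit_iff_ne_zero]
  exact Finset.prod_ne_zero_iff.mpr fun b _ ↦ h.upper_diag _ b.isLt

theorem elimCoeff_mul (h : IsPartialLU A L U k) :
    elimCoeff A k * leadingBlock L k = leadingCols L k := by
  rw [elimCoeff, h.leadingBlock_eq, h.leadingCols_eq, Matrix.mul_inv_rev]
  simp only [Matrix.mul_assoc, nonsing_inv_mul _ h.isUnit_det_lower, Matrix.mul_one,
    mul_nonsing_inv _ h.isUnit_det_upper]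

theorem geEntry_eq (h : IsPartialLU A L U k) (i j : Fin n) :
    geEntry A k i j = A i j - ∑ q ∈ Finset.Iio k, L i q * U q j := by
  have hschur : Matrix.of (geEntry A k) = A - leadingCols L k * leadingRows U k := by
    rw [geEntry_eq_sub_mul, h.leadingRows_eq, ← Matrix.mul_assoc, h.elimCoeff_mul]
  rw [← leadingCols_mul_leadingRows_apply]
  exact congrFun (congrFun hschur i) j

theorem geEntry_eq_zero (h : IsPartialLU A L U k) (hij : i < k ∨ j < k) : geEntry A k i j = 0 := by
  rw [h.geEntry_eq, ← h.mul_apply i j hij, mul_apply_eq_sum_Iio h.lower h.upper hij, sub_self]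

theorem elimCoeff_add_sum (h : IsPartialLU A L U k) (i : Fin n) (b : Fin k) :
    elimCoeff A k i b + ∑ a ∈ Finset.Ioi b, elimCoeff A k i a * leadingBlock L k a b =
      leadingCols L k i b := by
  have hb : leadingBlock L k b b = 1 := h.lower_diag _ b.isLt
  rw [← h.elimCoeff_mul, Matrix.mul_apply, ← mul_one (elimCoeff A k i b), ← hb,
    Finset.add_sum_Ioi_eq_sum_Ici (f := fun a ↦ elimCoeff A k i a * leadingBlock L k a b)]
  refine Finset.sum_subset (Finset.subset_univ _) fun a _ ha ↦ ?_
  have hab : leadingBlock L k a b = 0 := h.lower (by simpa using ha)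
  rw [hab, mul_zero]

end IsPartialLU

/-- The lower triangular factor produced by Gaussian elimination. Entries in the column of a zero
pivot are the junk value `0`. -/
noncomputable def luLower (A : Matrix (Fin n) (Fin n) ℝ) : Matrix (Fin n) (Fin n) ℝ :=
  .of fun i k ↦ if k ≤ i then geEntry A k i k / geEntry A k k k else 0

/-- The upper triangular factor produced by Gaussian elimination. -/
noncomputable def luUpper (A : Matrix (Fin n) (Fin n) ℝ) : Matrix (Fin n) (Fin n) ℝ :=
  .of fun k j ↦ if k ≤ j then geEntry A k k j else 0

theorem isLowerTriangular_luLower (A : Matrix (Fin n) (Fin n) ℝ) :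
    (luLower A).IsLowerTriangular :=
  fun i k (h : i < k) ↦ by simp [luLower, h.not_ge]

theorem isUpperTriangular_luUpper (A : Matrix (Fin n) (Fin n) ℝ) :
    (luUpper A).IsUpperTriangular :=
  fun k j (h : j < k) ↦ by simp [luUpper, h.not_ge]

theorem luLower_diag (hk : geEntry A k k k ≠ 0) : luLower A k k = 1 := by
  simp [luLower, hk]

/-- At step `min i j` the rank-one update of the elimination is exact in row or column
`min i j`, and later updates do not reach `(i, j)`. -/
theorem luLower_mul_luUpper_apply (h : IsPartialLU A (luLower A) (luUpper A) (min i j))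
    (hpivot : geEntry A (min i j) (min i j) (min i j) ≠ 0) :
    (luLower A * luUpper A) i j = A i j := by
  have hstep : luLower A i (min i j) * luUpper A (min i j) j = geEntry A (min i j) i j := by
    rcases le_total i j with hij | hij
    · rw [min_eq_left hij] at hpivot ⊢
      simp [luLower, luUpper, hij, hpivot]
    · rw [min_eq_right hij] at hpivot ⊢
      simp [luLower, luUpper, hij, div_mul_cancel₀ _ hpivot]
  have hsum : (luLower A * luUpper A) i j =
      ∑ q ∈ Finset.Iic (min i j), luLower A i q * luUpper A q j := by
    rw [Matrix.mul_apply]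
    refine (Finset.sum_subset (Finset.subset_univ _) fun q _ hq ↦ ?_).symm
    rcases min_lt_iff.mp (not_le.mp (mt Finset.mem_Iic.mpr hq)) with hq | hq
    · rw [isLowerTriangular_luLower A hq, zero_mul]
    · rw [isUpperTriangular_luUpper A hq, mul_zero]
  rw [hsum, ← Finset.sum_Iio_add_eq_sum_Iic, hstep, h.geEntry_eq, add_sub_cancel]

theorem isPartialLU_of_pivot_ne_zero (A : Matrix (Fin n) (Fin n) ℝ) (k : Fin n)
    (hpivot : ∀ q < k, geEntry A q q q ≠ 0) : IsPartialLU A (luLower A) (luUpper A) k := by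
  induction k using WellFoundedLT.induction with
  | ind k ih =>
    refine ⟨isLowerTriangular_luLower A, isUpperTriangular_luUpper A,
      fun q hq ↦ luLower_diag (hpivot q hq), fun q hq ↦ by simpa [luUpper] using hpivot q hq,
      fun i j hij ↦ ?_⟩
    have hr : min i j < k := min_lt_iff.mpr hij
    exact luLower_mul_luUpper_apply (ih _ hr fun q hq ↦ hpivot q (hq.trans hr)) (hpivot _ hr)

theorem luLower_mul_luUpper (hpivot : ∀ k, geEntry A k k k ≠ 0) : luLower A * luUpper A = A := by
  ext i j
  exact luLower_mul_luUpper_apply (isPartialLU_of_pivot_ne_zero A _ fun q _ ↦ hpivot q) (hpivot _)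

theorem exists_mulVec_eq_geEntry_col (A : Matrix (Fin n) (Fin n) ℝ) (k : Fin n) :
    ∃ v ≠ 0, A *ᵥ v = fun i ↦ geEntry A k i k := by
  set v := Pi.single k 1 - leadingCols 1 k *ᵥ ((leadingBlock A k)⁻¹ *ᵥ (leadingRows A k).col k)
  have hcols : A * leadingCols 1 k = leadingCols A k := mul_submatrix_one (.refl _) _ A
  have hvk : v k = 1 := by
    have hne (b : Fin k) : k ≠ Fin.castLE k.isLt.le b := Fin.ne_of_gt b.isLt
    simp [v, mulVec, dotProduct, leadingCols, hne, -mulVec_mulVec]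
  refine ⟨v, fun hv ↦ by simp [hv] at hvk, ?_⟩
  simp only [v, mulVec_sub, mulVec_single_one, mulVec_mulVec, ← Matrix.mul_assoc, hcols]
  exact congrArg (·.col k) (geEntry_eq_sub_mul A k).symm

/-- With a zero pivot, PP would make the whole pivot column of the Schur complement vanish, and
that column lies in the range of `A`. -/
theorem IsPP.pivot_ne_zero (hPP : IsPP A) (hA : A.det ≠ 0) (k : Fin n) : geEntry A k k k ≠ 0 := by
  induction k using WellFoundedLT.induction with
  | ind k ih =>
    intro hk
    obtain ⟨v, hv, hAv⟩ := exists_mulVec_eq_geEntry_col A k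
    refine hA (exists_mulVec_eq_zero_iff.mp ⟨v, hv, hAv.trans (funext fun i ↦ ?_)⟩)
    rcases lt_or_ge i k with hik | hki
    · exact (isPartialLU_of_pivot_ne_zero A k ih).geEntry_eq_zero (.inl hik)
    · simpa [hk] using hPP k i hki

theorem IsPP.abs_luLower_le_one (hPP : IsPP A) (i k : Fin n) : |luLower A i k| ≤ 1 := by
  rw [luLower, of_apply]
  split_ifs with hki
  · rw [abs_div]
    exact div_le_one_of_le₀ (hPP k i hki) (abs_nonneg _)
  · simp

end Elimination

section RowNorm

variable {n : ℕ} {Q : Matrix (Fin n) (Fin n) ℝ} {k i : Fin n}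

theorem mul_leadingRows_one_apply_eq_zero (C : Matrix (Fin n) (Fin k) ℝ) (hki : k ≤ i) (l : Fin n) :
    (C * leadingRows 1 k) l i = 0 := by
  have hne (b : Fin k) : Fin.castLE k.isLt.le b ≠ i := Fin.ne_of_lt (b.isLt.trans_le hki)
  simp [Matrix.mul_apply, leadingRows, hne]

theorem leadingRows_one_mul_transpose (k : Fin n) :
    leadingRows (1 : Matrix (Fin n) (Fin n) ℝ) k * (leadingRows 1 k)ᵀ = 1 := by
  rw [leadingRows, transpose_submatrix, ← submatrix_mul _ _ _ id _ Function.bijective_id,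
    transpose_one, Matrix.mul_one]
  exact submatrix_one _ (Fin.castLE_injective _)

theorem geEntry_mul_transpose_self (hQ : Q * Qᵀ = 1) (k : Fin n) :
    Matrix.of (geEntry Q k) * (Matrix.of (geEntry Q k))ᵀ =
      1 - elimCoeff Q k * leadingRows 1 k - (elimCoeff Q k * leadingRows 1 k)ᵀ +
        elimCoeff Q k * (elimCoeff Q k)ᵀ := by
  rw [geEntry_eq_mul]
  set E : Matrix (Fin k) (Fin n) ℝ := leadingRows 1 k
  set C := elimCoeff Q k
  have hCE : C * E * (C * E)ᵀ = C * Cᵀ := by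
    rw [transpose_mul, Matrix.mul_assoc, ← Matrix.mul_assoc E, leadingRows_one_mul_transpose,
      Matrix.one_mul]
  calc (1 - C * E) * Q * ((1 - C * E) * Q)ᵀ = (1 - C * E) * (Q * Qᵀ) * (1 - C * E)ᵀ := by
        simp only [transpose_mul, Matrix.mul_assoc]
    _ = 1 - C * E - (C * E)ᵀ + C * E * (C * E)ᵀ := by
        rw [hQ, transpose_sub, transpose_one]; noncomm_ring
    _ = 1 - C * E - (C * E)ᵀ + C * Cᵀ := by rw [hCE]

theorem sum_geEntry_sq (hQ : Q * Qᵀ = 1) (hki : k ≤ i) :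
    ∑ j, geEntry Q k i j ^ 2 = 1 + ∑ b, elimCoeff Q k i b ^ 2 := by
  have hdiag := congrFun (congrFun (geEntry_mul_transpose_self hQ k) i) i
  rw [Matrix.add_apply, Matrix.sub_apply, Matrix.sub_apply, transpose_apply,
    mul_leadingRows_one_apply_eq_zero _ hki, one_apply_eq, sub_zero, sub_zero] at hdiag
  simpa only [Matrix.mul_apply, transpose_apply, of_apply, ← sq] using hdiag

theorem sum_geEntry_mul (hQ : Q * Qᵀ = 1) (hki : k ≤ i) : ∑ j, geEntry Q k i j * Q i j = 1 := by
  have hgram : Matrix.of (geEntry Q k) * Qᵀ = 1 - elimCoeff Q k * leadingRows 1 k := by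
    rw [geEntry_eq_mul, Matrix.mul_assoc, hQ, Matrix.mul_one]
  have hdiag := congrFun (congrFun hgram i) i
  rwa [Matrix.sub_apply, mul_leadingRows_one_apply_eq_zero _ hki, one_apply_eq, sub_zero] at hdiag

end RowNorm

section BackwardSubstitution

variable {k : ℕ} {M : Matrix (Fin k) (Fin k) ℝ} {c l : Fin k → ℝ}

theorem one_add_sum_Ioi_two_pow_rev (b : Fin k) :
    1 + ∑ a ∈ Finset.Ioi b, (2 : ℝ) ^ (a.rev : ℕ) = 2 ^ (b.rev : ℕ) := by
  have hrev : ∑ a ∈ Finset.Ioi b, (2 : ℝ) ^ (a.rev : ℕ) =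
      ∑ p ∈ Finset.range b.rev, (2 : ℝ) ^ p := by
    rw [← Nat.Iio_eq_range, ← Fin.map_valEmbedding_Iio, Finset.sum_map, ← Fin.map_revPerm_Ioi,
      Finset.sum_map]
    simp
  rw [hrev, geom_sum_eq (by norm_num)]
  ring

theorem sum_two_pow_rev_sq (k : ℕ) :
    ∑ b : Fin k, ((2 : ℝ) ^ (b.rev : ℕ)) ^ 2 = (4 ^ k - 1) / 3 := by
  rw [Fintype.sum_equiv Fin.revPerm (fun b : Fin k ↦ ((2 : ℝ) ^ (b.rev : ℕ)) ^ 2)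
      (fun b : Fin k ↦ ((2 : ℝ) ^ (b : ℕ)) ^ 2) fun _ ↦ rfl,
    Fin.sum_univ_eq_sum_range fun p ↦ ((2 : ℝ) ^ p) ^ 2]
  simp only [← pow_mul, mul_comm _ 2]
  simp only [pow_mul]
  rw [geom_sum_eq (by norm_num)]
  norm_num

theorem abs_le_two_pow_rev (hM : ∀ a b, |M a b| ≤ 1) (hl : ∀ b, |l b| ≤ 1)
    (hc : ∀ b, c b + ∑ a ∈ Finset.Ioi b, c a * M a b = l b) (b : Fin k) :
    |c b| ≤ 2 ^ (b.rev : ℕ) := by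
  induction b using WellFoundedGT.induction with
  | ind b ih =>
    have hterm (a) (ha : a ∈ Finset.Ioi b) : |c a * M a b| ≤ 2 ^ (a.rev : ℕ) := by
      rw [abs_mul]
      exact mul_le_of_le_one_right (abs_nonneg _) (hM a b) |>.trans (ih a (Finset.mem_Ioi.mp ha))
    calc |c b| = |l b - ∑ a ∈ Finset.Ioi b, c a * M a b| := by rw [← hc b, add_sub_cancel_right]
      _ ≤ |l b| + ∑ a ∈ Finset.Ioi b, |c a * M a b| :=
        (abs_sub _ _).trans (add_le_add_right (Finset.abs_sum_le_sum_abs _ _) _)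
      _ ≤ 1 + ∑ a ∈ Finset.Ioi b, 2 ^ (a.rev : ℕ) := add_le_add (hl b) (Finset.sum_le_sum hterm)
      _ = 2 ^ (b.rev : ℕ) := one_add_sum_Ioi_two_pow_rev b

/-- Each term of the substitution defining `c b` must attain its bound with the sign `s` of
`c b`. -/
theorem sign_mul_eq_of_extremal {s : ℝ} (hM : ∀ a b, |M a b| ≤ 1) (hl : ∀ b, |l b| ≤ 1)
    (hc : ∀ b, c b + ∑ a ∈ Finset.Ioi b, c a * M a b = l b) {b : Fin k} (hs : |s| = 1)
    (hb : s * c b = 2 ^ (b.rev : ℕ)) :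
    s * l b = 1 ∧ ∀ a, b < a → s * (c a * M a b) = -2 ^ (a.rev : ℕ) := by
  have hnonneg (a) (_ : a ∈ Finset.Ioi b) : 0 ≤ 2 ^ (a.rev : ℕ) + s * (c a * M a b) := by
    have hle : |s * (c a * M a b)| ≤ 2 ^ (a.rev : ℕ) := by
      rw [abs_mul, abs_mul, hs, one_mul]
      exact (mul_le_of_le_one_right (abs_nonneg _) (hM a b)).trans (abs_le_two_pow_rev hM hl hc a)
    linarith [neg_le_of_abs_le hle]
  have hsl : s * l b ≤ 1 := (le_abs_self _).trans (by rw [abs_mul, hs, one_mul]; exact hl b)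
  have hsum : ∑ a ∈ Finset.Ioi b, (2 ^ (a.rev : ℕ) + s * (c a * M a b)) = s * l b - 1 := by
    rw [Finset.sum_add_distrib, ← Finset.mul_sum, ← hc b, mul_add, hb,
      ← one_add_sum_Ioi_two_pow_rev]
    ring
  have hsum_nonneg := hsum ▸ Finset.sum_nonneg hnonneg
  have hl_eq : s * l b = 1 := by linarith
  refine ⟨hl_eq, fun a ha ↦ ?_⟩
  rw [hl_eq, sub_self, Finset.sum_eq_zero_iff_of_nonneg hnonneg] at hsum
  linarith [hsum a (Finset.mem_Ioi.mpr ha)]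

theorem eq_sign_of_extremal (hM : ∀ a b, |M a b| ≤ 1) (hl : ∀ b, |l b| ≤ 1)
    (hc : ∀ b, c b + ∑ a ∈ Finset.Ioi b, c a * M a b = l b)
    (hmax : ∀ b, |c b| = 2 ^ (b.rev : ℕ)) :
    (∀ b, l b * l b = 1) ∧ ∀ a b, b < a → M a b = -(l a * l b) := by
  have hsign (b) : |l b| = 1 ∧ l b * c b = 2 ^ (b.rev : ℕ) := by
    rcases abs_choice (c b) with h | h
    · have hb : 1 * c b = 2 ^ (b.rev : ℕ) := by rw [one_mul, ← h, hmax]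
      have hlb : l b = 1 := by linarith [(sign_mul_eq_of_extremal hM hl hc abs_one hb).1]
      rw [hlb]
      exact ⟨abs_one, hb⟩
    · have hb : -1 * c b = 2 ^ (b.rev : ℕ) := by rw [neg_one_mul, ← h, hmax]
      have hlb : l b = -1 := by linarith [(sign_mul_eq_of_extremal hM hl hc (by simp) hb).1]
      rw [hlb]
      exact ⟨by simp, hb⟩
  have hsq (b) : l b * l b = 1 := by rw [← abs_mul_abs_self, (hsign b).1, one_mul]
  refine ⟨hsq, fun a b hab ↦ ?_⟩
  have hMab := (sign_mul_eq_of_extremal hM hl hc (hsign b).1 (hsign b).2).2 a hab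
  have hprod : l b * l a * M a b = -1 := by
    refine mul_right_cancel₀ (pow_ne_zero (a.rev : ℕ) (two_ne_zero (α := ℝ))) ?_
    rw [← (hsign a).2] at hMab ⊢
    linear_combination l b * c a * M a b * hsq a + hMab
  linear_combination (l a * l b) * hprod - M a b * (l a * l a * hsq b + hsq a)

end BackwardSubstitution

section SignDiag

variable {n : ℕ} {S T : Matrix (Fin n) (Fin n) ℝ}

theorem isSignDiag_diagonal {s : Fin n → ℝ} (hs : ∀ i, s i = 1 ∨ s i = -1) :
    IsSignDiag (diagonal s) :=
  ⟨fun _ _ hij ↦ diagonal_apply_ne _ hij, fun i ↦ by simpa using hs i⟩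

namespace IsSignDiag

theorem eq_diagonal (hS : IsSignDiag S) : S = diagonal S.diag :=
  (IsDiag.diagonal_diag fun i j hij ↦ hS.1 i j hij).symm

theorem transpose_eq (hS : IsSignDiag S) : Sᵀ = S := by
  rw [hS.eq_diagonal, diagonal_transpose]

theorem mul_self (hS : IsSignDiag S) : S * S = 1 := by
  have hsq (i) : S i i * S i i = 1 := by rcases hS.2 i with h | h <;> simp [h]
  rw [hS.eq_diagonal, diagonal_mul_diagonal, ← diagonal_one]
  exact congrArg diagonal (funext hsq)

theorem abs_apply_self (hS : IsSignDiag S) (i : Fin n) : |S i i| = 1 := by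
  rcases hS.2 i with h | h <;> simp [h]

theorem mul_mul_apply (hS : IsSignDiag S) (hT : IsSignDiag T) (A : Matrix (Fin n) (Fin n) ℝ)
    (i j : Fin n) : (S * A * T) i j = S i i * A i j * T j j := by
  nth_rw 1 [hS.eq_diagonal, hT.eq_diagonal]
  rw [mul_diagonal, diagonal_mul, diag_apply, diag_apply]

end IsSignDiag

end SignDiag

section Extremal

variable {n : ℕ} {A Q : Matrix (Fin n) (Fin n) ℝ} {k i j : Fin n}

namespace IsPP

theorem elimCoeff_add_sum (hPP : IsPP A) (hA : A.det ≠ 0) (k i : Fin n) (b : Fin k) :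
    elimCoeff A k i b + ∑ a ∈ Finset.Ioi b, elimCoeff A k i a * leadingBlock (luLower A) k a b =
      leadingCols (luLower A) k i b :=
  (isPartialLU_of_pivot_ne_zero A k fun q _ ↦ hPP.pivot_ne_zero hA q).elimCoeff_add_sum i b

theorem abs_elimCoeff_le (hPP : IsPP A) (hA : A.det ≠ 0) (k i : Fin n) (b : Fin k) :
    |elimCoeff A k i b| ≤ 2 ^ (b.rev : ℕ) :=
  abs_le_two_pow_rev (fun _ _ ↦ hPP.abs_luLower_le_one _ _) (fun _ ↦ hPP.abs_luLower_le_one _ _)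
    (hPP.elimCoeff_add_sum hA k i) b

theorem elimCoeff_sq_le (hPP : IsPP A) (hA : A.det ≠ 0) (k i : Fin n) (b : Fin k) :
    elimCoeff A k i b ^ 2 ≤ (2 ^ (b.rev : ℕ)) ^ 2 :=
  sq_le_sq.mpr ((hPP.abs_elimCoeff_le hA k i b).trans (le_abs_self _))

theorem geEntry_sq_le (hPP : IsPP Q) (hQ : Q * Qᵀ = 1) (hki : k ≤ i) (j : Fin n) :
    geEntry Q k i j ^ 2 ≤ (4 ^ (k : ℕ) + 2) / 3 := by
  calc geEntry Q k i j ^ 2 ≤ ∑ j, geEntry Q k i j ^ 2 :=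
        Finset.single_le_sum (fun _ _ ↦ sq_nonneg _) (Finset.mem_univ j)
    _ = 1 + ∑ b, elimCoeff Q k i b ^ 2 := sum_geEntry_sq hQ hki
    _ ≤ 1 + ∑ b : Fin k, (2 ^ (b.rev : ℕ)) ^ 2 :=
        add_le_add_right (Finset.sum_le_sum fun b _ ↦
          hPP.elimCoeff_sq_le (det_ne_zero_of_right_inverse hQ) k i b) 1
    _ = (4 ^ (k : ℕ) + 2) / 3 := by rw [sum_two_pow_rev_sq]; ring

theorem abs_elimCoeff_eq (hPP : IsPP Q) (hQ : Q * Qᵀ = 1) (hki : k ≤ i)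
    (hmax : geEntry Q k i j ^ 2 = (4 ^ (k : ℕ) + 2) / 3) (b : Fin k) :
    |elimCoeff Q k i b| = 2 ^ (b.rev : ℕ) := by
  have hle (b) (_ : b ∈ Finset.univ) : elimCoeff Q k i b ^ 2 ≤ (2 ^ (b.rev : ℕ)) ^ 2 :=
    hPP.elimCoeff_sq_le (det_ne_zero_of_right_inverse hQ) k i b
  have hentry : geEntry Q k i j ^ 2 ≤ ∑ j, geEntry Q k i j ^ 2 :=
    Finset.single_le_sum (fun _ _ ↦ sq_nonneg _) (Finset.mem_univ j)
  have hsum : ∑ b, elimCoeff Q k i b ^ 2 = ∑ b : Fin k, ((2 : ℝ) ^ (b.rev : ℕ)) ^ 2 := by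
    refine (Finset.sum_le_sum hle).antisymm ?_
    rw [sum_geEntry_sq hQ hki] at hentry
    rw [sum_two_pow_rev_sq]
    linarith
  have hsq := (Finset.sum_eq_sum_iff_of_le hle).mp hsum b (Finset.mem_univ b)
  rwa [sq_eq_sq_iff_abs_eq_abs, abs_of_pos (by positivity : (0 : ℝ) < 2 ^ (b.rev : ℕ))] at hsq

theorem luLower_eq_neg_mul (hPP : IsPP Q) (hQ : Q * Qᵀ = 1) (hki : k ≤ i)
    (hmax : geEntry Q k i j ^ 2 = (4 ^ (k : ℕ) + 2) / 3) :
    (∀ b < k, luLower Q i b * luLower Q i b = 1) ∧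
      ∀ a < k, ∀ b < a, luLower Q a b = -(luLower Q i a * luLower Q i b) := by
  obtain ⟨hsq, hmul⟩ := eq_sign_of_extremal (M := leadingBlock (luLower Q) k)
    (fun _ _ ↦ hPP.abs_luLower_le_one _ _) (fun _ ↦ hPP.abs_luLower_le_one _ _)
    (hPP.elimCoeff_add_sum (det_ne_zero_of_right_inverse hQ) k i) (hPP.abs_elimCoeff_eq hQ hki hmax)
  exact ⟨fun b hb ↦ hsq ⟨b, hb⟩, fun a ha b hb ↦ hmul ⟨a, ha⟩ ⟨b, hb.trans ha⟩ hb⟩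

theorem exists_luLower_eq {m : ℕ} {Q : Matrix (Fin (m + 1)) (Fin (m + 1)) ℝ} {j : Fin (m + 1)}
    (hPP : IsPP Q) (hQ : Q * Qᵀ = 1)
    (hmax : geEntry Q (Fin.last m) (Fin.last m) j ^ 2 = (4 ^ m + 2) / 3) :
    ∃ S, IsSignDiag S ∧ luLower Q = S * Lmat (m + 1) * S := by
  obtain ⟨hsq, hmul⟩ := hPP.luLower_eq_neg_mul hQ le_rfl hmax
  set s : Fin (m + 1) → ℝ := fun a ↦ if a = Fin.last m then -1 else luLower Q (Fin.last m) a
  have hs (a) : s a * s a = 1 := by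
    by_cases ha : a = Fin.last m
    · simp [s, ha]
    · simpa [s, ha] using hsq a (Fin.lt_last_iff_ne_last.mpr ha)
  have hS : IsSignDiag (diagonal s) := isSignDiag_diagonal fun a ↦ mul_self_eq_one_iff.mp (hs a)
  refine ⟨diagonal s, hS, ?_⟩
  ext a b
  rw [hS.mul_mul_apply hS, diagonal_apply_eq, diagonal_apply_eq]
  rcases lt_trichotomy a b with hab | rfl | hba
  · simp [isLowerTriangular_luLower Q hab, Lmat, hab.ne, hab.not_gt]
  · rw [luLower_diag (hPP.pivot_ne_zero (det_ne_zero_of_right_inverse hQ) a)]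
    simp [Lmat, hs]
  · have hb : b ≠ Fin.last m := (hba.trans_le (Fin.le_last a)).ne
    by_cases ha : a = Fin.last m
    · simp [Lmat, s, ha, hb, hb.symm, Fin.lt_last_iff_ne_last]
    · simp [Lmat, s, ha, hb, hba, hba.ne', hmul a (Fin.lt_last_iff_ne_last.mpr ha) b hba]

end IsPP

end Extremal

section Triangular

variable {n : ℕ} {L P Q R U Y : Matrix (Fin n) (Fin n) ℝ}

theorem isDiag_transpose_mul_of_factors (hP : P = L * R) (hQ : Q = L * U)
    (hR : R.IsUpperTriangular) (hU : U.IsUpperTriangular)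
    (hLP : (Lᵀ * P).IsLowerTriangular) (hLQ : (Lᵀ * Q).IsLowerTriangular) : (Pᵀ * Q).IsDiag := by
  have hlower : (Pᵀ * Q).IsLowerTriangular := by
    rw [hP, transpose_mul, Matrix.mul_assoc]
    exact BlockTriangular.mul hR.transpose hLQ
  have hupper : (Pᵀ * Q).IsUpperTriangular := by
    have hPQ : Pᵀ * Q = (Lᵀ * P)ᵀ * U := by
      rw [transpose_mul, transpose_transpose, Matrix.mul_assoc, hQ]
    rw [hPQ]
    exact BlockTriangular.mul hLP.transpose hU
  intro i j hij
  exact hij.lt_or_gt.elim (fun h ↦ hlower h) fun h ↦ hupper h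

theorem transpose_mul_apply_self (hR : R.IsUpperTriangular) (hY : Y.IsLowerTriangular)
    (j : Fin n) : (Rᵀ * Y) j j = R j j * Y j j := by
  rw [Matrix.mul_apply]
  refine Finset.sum_eq_single j (fun l _ hlj ↦ ?_) (by simp)
  rcases hlj.lt_or_gt with h | h
  · rw [hY h, mul_zero]
  · rw [transpose_apply, hR h, zero_mul]

theorem isLowerTriangular_transpose_mul_of_orthogonal (hQ : Qᵀ * Q = 1) (hLU : Q = L * U)
    (hU : U.IsUpperTriangular) : (Lᵀ * Q).IsLowerTriangular := by
  have hinv : Uᵀ * (Lᵀ * Q) = 1 := by rw [← Matrix.mul_assoc, ← transpose_mul, ← hLU, hQ]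
  have := invertibleOfRightInverse _ _ hinv
  rw [← inv_eq_right_inv hinv]
  exact blockTriangular_inv_of_blockTriangular hU.transpose

end Triangular

section Wilkinson

variable {n : ℕ}

theorem Lmat_mul_apply (M : Matrix (Fin n) (Fin n) ℝ) (i j : Fin n) :
    (Lmat n * M) i j = M i j - ∑ l ∈ Finset.Iio i, M l j := by
  have hterm (l) : Lmat n i l * M l j =
      (if i = l then M l j else 0) - if l ∈ Finset.Iio i then M l j else 0 := by
    rcases lt_trichotomy l i with h | rfl | h
    · simp [Lmat, h, h.ne']
    · simp [Lmat]
    · simp [Lmat, h.ne, h.not_gt]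
  simp_rw [Matrix.mul_apply, hterm, Finset.sum_sub_distrib, Finset.sum_ite_mem]
  simp

theorem Lmat_transpose_mul_apply (M : Matrix (Fin n) (Fin n) ℝ) (i j : Fin n) :
    ((Lmat n)ᵀ * M) i j = M i j - ∑ l ∈ Finset.Ioi i, M l j := by
  have hterm (l) : Lmat n l i * M l j =
      (if i = l then M l j else 0) - if l ∈ Finset.Ioi i then M l j else 0 := by
    rcases lt_trichotomy l i with h | rfl | h
    · simp [Lmat, h.ne, h.ne', h.not_gt]
    · simp [Lmat]
    · simp [Lmat, h, h.ne, h.ne']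
  simp_rw [Matrix.mul_apply, transpose_apply, hterm, Finset.sum_sub_distrib, Finset.sum_ite_mem]
  simp

theorem sum_Iio_sub (f : ℕ → ℝ) (i : Fin n) :
    ∑ l ∈ Finset.Iio i, (f (l + 1) - f l) = f i - f 0 := by
  rw [← Finset.sum_range_sub, ← Nat.Iio_eq_range, ← Fin.map_valEmbedding_Iio, Finset.sum_map]
  rfl

theorem sum_Ioi_sub (f : ℕ → ℝ) (i : Fin n) :
    ∑ l ∈ Finset.Ioi i, (f l - f (l + 1)) = f (i + 1) - f n := by
  have hfin : ∑ l ∈ Finset.Ioi i, (f l - f (l + 1)) =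
      ∑ p ∈ Finset.Ico (i + 1 : ℕ) n, (f p - f (p + 1)) := by
    rw [Finset.Ico_add_one_left_eq_Ioo, ← Fin.map_valEmbedding_Ioi, Finset.sum_map]
    rfl
  rw [hfin, ← neg_sub (f n), ← Finset.sum_Ico_sub f i.isLt, ← Finset.sum_neg_distrib]
  simp

theorem alpha_succ (j : ℕ) : alpha (j + 1) = 1 + 2 / 3 * (4 ^ j - 1) := rfl

theorem one_le_alpha (j : ℕ) : 1 ≤ alpha j := by
  have : (1 : ℝ) ≤ 4 ^ (j - 1) := one_le_pow₀ (by norm_num)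
  unfold alpha
  linarith

/-- Column `j` of `Qhat (m + 2)`, with rows and columns indexed from `0`, before the column
`j = m` is divided by `alpha (m + 1)`; this common factor is what lets one formula cover all
columns. -/
noncomputable def qhatCol (m j i : ℕ) : ℝ :=
  if i < j then -((m : ℝ) - j) * 2 ^ (j - i - 1)
  else if i = j then ((m : ℝ) + 1 - j) * (alpha (j + 1) - 1) + 1
  else -alpha (j + 1)

/-- The sum of the first `i` entries of column `j` of the upper triangular matrix `R` whose product
`Lmat (m + 2) * R` has columns `qhatCol m j`. -/
noncomputable def factorColSum (m j i : ℕ) : ℝ :=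
  if i ≤ j then -((m : ℝ) - j) * (2 ^ (j - i) * (4 ^ i - 1) / 3) else alpha (j + 1)

/-- The sum of the entries of `qhatCol m j` from index `i` on. -/
noncomputable def qhatColTail (m j i : ℕ) : ℝ :=
  if i ≤ j then -((m : ℝ) - j) * 2 ^ (j - i) else -((m : ℝ) + 2 - i) * alpha (j + 1)

theorem qhatCol_eq_factorColSum_sub (m j i : ℕ) :
    qhatCol m j i = factorColSum m j (i + 1) - 2 * factorColSum m j i := by
  rcases lt_trichotomy i j with h | rfl | h
  · obtain ⟨d, rfl⟩ := Nat.exists_eq_add_of_lt h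
    have hd : i + d + 1 - i = d + 1 := by lia
    have hd' : i + d + 1 - (i + 1) = d := by lia
    simp only [qhatCol, factorColSum, h, h.le, Nat.succ_le_of_lt h, if_true, hd, hd',
      Nat.add_sub_cancel]
    ring
  · simp only [qhatCol, factorColSum, alpha_succ, lt_self_iff_false, le_refl,
      Nat.not_succ_le_self, if_true, if_false, Nat.sub_self]
    ring
  · simp only [qhatCol, factorColSum, h.not_gt, h.ne', h.not_ge, (h.trans i.lt_succ_self).not_ge,
      if_false]
    ring

theorem qhatCol_eq_qhatColTail_sub (m j i : ℕ) :
    qhatCol m j i = qhatColTail m j i - qhatColTail m j (i + 1) := by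
  rcases lt_trichotomy i j with h | rfl | h
  · obtain ⟨d, rfl⟩ := Nat.exists_eq_add_of_lt h
    have hd : i + d + 1 - i = d + 1 := by lia
    have hd' : i + d + 1 - (i + 1) = d := by lia
    simp only [qhatCol, qhatColTail, h, h.le, Nat.succ_le_of_lt h, if_true, hd, hd',
      Nat.add_sub_cancel]
    ring
  · simp only [qhatCol, qhatColTail, lt_self_iff_false, le_refl, Nat.not_succ_le_self, if_true,
      if_false, Nat.sub_self]
    push_cast
    ring
  · simp only [qhatCol, qhatColTail, h.not_gt, h.ne', h.not_ge, (h.trans i.lt_succ_self).not_ge,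
      if_false]
    push_cast
    ring

/-- The upper triangular matrix `R` such that `Lmat (m + 2) * R` has columns `qhatCol m j`. -/
noncomputable def qhatFactor (m : ℕ) : Matrix (Fin (m + 2)) (Fin (m + 2)) ℝ :=
  .of fun i j ↦ factorColSum m j (i + 1) - factorColSum m j i

theorem isUpperTriangular_qhatFactor (m : ℕ) : (qhatFactor m).IsUpperTriangular := by
  intro i j (hji : j < i)
  simp [qhatFactor, factorColSum, hji.not_gt, hji.not_ge]

theorem Lmat_mul_qhatFactor_apply (m : ℕ) (i j : Fin (m + 2)) :
    (Lmat (m + 2) * qhatFactor m) i j = qhatCol m j i := by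
  have hzero : factorColSum m j 0 = 0 := by simp [factorColSum]
  simp only [Lmat_mul_apply, qhatFactor, of_apply]
  rw [sum_Iio_sub, qhatCol_eq_factorColSum_sub, hzero]
  ring

theorem Lmat_transpose_mul_Lmat_mul_qhatFactor_apply (m : ℕ) (i j : Fin (m + 2)) :
    ((Lmat (m + 2))ᵀ * (Lmat (m + 2) * qhatFactor m)) i j =
      qhatColTail m j i - 2 * qhatColTail m j (i + 1) := by
  have hzero : qhatColTail m j (m + 2 : ℕ) = 0 := by
    simp [qhatColTail, j.isLt.not_ge]
  simp only [Lmat_transpose_mul_apply, Lmat_mul_qhatFactor_apply, qhatCol_eq_qhatColTail_sub]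
  rw [sum_Ioi_sub, hzero]
  ring

theorem isLowerTriangular_Lmat_transpose_mul (m : ℕ) :
    ((Lmat (m + 2))ᵀ * (Lmat (m + 2) * qhatFactor m)).IsLowerTriangular := by
  intro i j (hij : i < j)
  have hij' : (i : ℕ) < j := hij
  obtain ⟨d, hd⟩ := Nat.exists_eq_add_of_lt hij'
  have hsub : (j : ℕ) - i = d + 1 := by lia
  have hsub' : (j : ℕ) - (i + 1) = d := by lia
  rw [Lmat_transpose_mul_Lmat_mul_qhatFactor_apply]
  simp only [qhatColTail, hij'.le, Nat.succ_le_of_lt hij', if_true, hsub, hsub']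
  ring

/-- The factor by which column `j` of `qhatCol m` is scaled in `Qhat (m + 2)`. -/
noncomputable def qhatScale (m : ℕ) (j : Fin (m + 2)) : ℝ :=
  if (j : ℕ) = m then (alpha (m + 1))⁻¹ else 1

theorem Qhat_apply (m : ℕ) (i j : Fin (m + 2)) :
    Qhat (m + 2) i j = qhatCol m j i * qhatScale m j := by
  have hα : alpha (m + 1) ≠ 0 := (zero_lt_one.trans_le (one_le_alpha _)).ne'
  rcases Nat.lt_succ_iff_lt_or_eq.mp j.isLt with hj | hj
  · rcases Nat.lt_succ_iff_lt_or_eq.mp hj with hj' | hj'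
    · simp only [Qhat, qhatCol, qhatScale, Nat.add_one_sub_one, Nat.add_sub_cancel, hj.ne, hj'.ne,
        if_false, mul_one]
      push_cast
      ring_nf
    · rcases lt_trichotomy (i : ℕ) m with hi | hi | hi
      · simp [Qhat, qhatCol, qhatScale, hj', hi, hi.ne, (hi.trans m.lt_succ_self).ne]
      · simp [Qhat, qhatCol, qhatScale, hj', hi, hα]
      · have hi' : (i : ℕ) = m + 1 := by lia
        simp [Qhat, qhatCol, qhatScale, hj', hi', hα]
  · rcases Nat.lt_succ_iff_lt_or_eq.mp i.isLt with hi | hi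
    · have hexp : m + 1 - (i : ℕ) - 1 = m - i := by lia
      simp [Qhat, qhatCol, qhatScale, hj, hi, hi.ne, hexp]
    · simp [Qhat, qhatCol, qhatScale, hj, hi]

theorem Qhat_eq (m : ℕ) :
    Qhat (m + 2) = Lmat (m + 2) * (qhatFactor m * diagonal (qhatScale m)) := by
  ext i j
  rw [← Matrix.mul_assoc, mul_diagonal, Lmat_mul_qhatFactor_apply, Qhat_apply]

end Wilkinson

section Qhat

theorem qhatFactor_apply_self (m : ℕ) (j : Fin (m + 2)) :
    qhatFactor m j j =
      (alpha (j + 1) + 1) / 2 + ((m : ℝ) + 1 - (j : ℕ)) * (alpha (j + 1) - 1) / 2 := by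
  simp only [qhatFactor, of_apply, factorColSum, le_refl, Nat.not_succ_le_self, if_true, if_false,
    Nat.sub_self, alpha_succ]
  ring

theorem Lmat_transpose_mul_Lmat_mul_qhatFactor_apply_self (m : ℕ) (j : Fin (m + 2)) :
    ((Lmat (m + 2))ᵀ * (Lmat (m + 2) * qhatFactor m)) j j =
      ((m : ℝ) + 1 - (j : ℕ)) * (2 * alpha (j + 1) - 1) + 1 := by
  rw [Lmat_transpose_mul_Lmat_mul_qhatFactor_apply]
  simp only [qhatColTail, le_refl, Nat.not_succ_le_self, if_true, if_false, Nat.sub_self]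
  push_cast
  ring

theorem alpha_succ_succ (j : ℕ) : alpha (j + 2) = 4 * alpha (j + 1) - 1 := by
  rw [alpha_succ, alpha_succ]
  ring

theorem Dhat_apply_self (m : ℕ) (j : Fin (m + 2)) :
    Dhat (m + 2) j j =
      ((alpha (j + 1) + 1) / 2 + ((m : ℝ) + 1 - (j : ℕ)) * (alpha (j + 1) - 1) / 2) *
        (((m : ℝ) + 1 - (j : ℕ)) * (2 * alpha (j + 1) - 1) + 1) * qhatScale m j ^ 2 := by
  rw [Dhat, diagonal_apply_eq, qhatScale]
  rcases Nat.eq_zero_or_pos j with hj | hj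
  · obtain rfl | hm := eq_or_ne 0 m
    · norm_num [hj, alpha]
    · simp only [hj, hm, alpha_succ, pow_zero, if_true, if_false]
      push_cast
      ring
  obtain ⟨p, hp⟩ := Nat.exists_eq_add_of_lt hj
  rw [zero_add] at hp
  have hα := one_le_alpha (p + 1)
  have hα_ne : 4 * alpha (p + 1) - 1 ≠ 0 := by linarith
  rcases lt_trichotomy (p + 1) m with hpm | rfl | hpm
  · have hpm' : p ≠ m := by lia
    simp only [hp, alpha_succ_succ, hpm.ne, hpm', Nat.add_sub_cancel, Nat.add_one_sub_one,
      Nat.succ_ne_zero, Nat.add_right_cancel_iff, if_false]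
    push_cast
    field_simp
    ring
  · simp only [hp, alpha_succ_succ, Nat.add_sub_cancel, Nat.succ_ne_zero, if_true, if_false]
    push_cast
    field_simp
    ring
  · obtain rfl : p = m := by lia
    simp only [hp, alpha_succ_succ, Nat.add_sub_cancel, Nat.add_one_sub_one, Nat.succ_ne_zero,
      Nat.succ_ne_self, if_true, if_false]
    push_cast
    ring

theorem Dhat_pos (m : ℕ) (j : Fin (m + 2)) : 0 < Dhat (m + 2) j j := by
  have hα := one_le_alpha (j + 1)
  have hα' := one_le_alpha (m + 1)
  have hj : ((j : ℕ) : ℝ) ≤ m + 1 := by exact_mod_cast Nat.lt_succ_iff.mp j.isLt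
  have hscale : qhatScale m j ≠ 0 := by
    unfold qhatScale
    split_ifs <;> positivity
  have hR : 0 ≤ ((m : ℝ) + 1 - (j : ℕ)) * (alpha (j + 1) - 1) :=
    mul_nonneg (by linarith) (by linarith)
  have hY : 0 ≤ ((m : ℝ) + 1 - (j : ℕ)) * (2 * alpha (j + 1) - 1) :=
    mul_nonneg (by linarith) (by linarith)
  rw [Dhat_apply_self]
  exact mul_pos (mul_pos (by linarith) (add_pos_of_nonneg_of_pos hY one_pos))
    (sq_pos_of_ne_zero hscale)

theorem Qhat_transpose_mul_self (m : ℕ) : (Qhat (m + 2))ᵀ * Qhat (m + 2) = Dhat (m + 2) := by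
  set P := Lmat (m + 2) * qhatFactor m with hP
  have hR := isUpperTriangular_qhatFactor m
  have hLP := isLowerTriangular_Lmat_transpose_mul m
  have hdiag : (Pᵀ * P).IsDiag := isDiag_transpose_mul_of_factors hP hP hR hR hLP hLP
  have hgram : (Qhat (m + 2))ᵀ * Qhat (m + 2) =
      diagonal (qhatScale m) * (Pᵀ * P) * diagonal (qhatScale m) := by
    rw [Qhat_eq, ← Matrix.mul_assoc (Lmat _), ← hP, transpose_mul, diagonal_transpose]
    simp only [Matrix.mul_assoc]
  ext i j
  rw [hgram, mul_diagonal, diagonal_mul]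
  obtain rfl | hij := eq_or_ne i j
  · have hPP : (Pᵀ * P) i i = qhatFactor m i i * ((Lmat (m + 2))ᵀ * P) i i := by
      rw [← transpose_mul_apply_self hR hLP, hP, transpose_mul, Matrix.mul_assoc]
    rw [hPP, qhatFactor_apply_self, Lmat_transpose_mul_Lmat_mul_qhatFactor_apply_self,
      Dhat_apply_self]
    ring
  · rw [hdiag hij, mul_zero, zero_mul, Dhat, diagonal_apply_ne _ hij]

end Qhat

section Rigidity

variable {m : ℕ} {Q S U : Matrix (Fin (m + 2)) (Fin (m + 2)) ℝ}

/-- `LᵀQ` and `LᵀQ̂` are both lower triangular, so `X = Q̂ᵀQ` is diagonal; since `XXᵀ = D̂`, it is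
`D̂^{1/2}` up to signs. -/
theorem exists_eq_Qmat_mul_of_eq_Lmat_mul (hQ : Qᵀ * Q = 1) (hU : U.IsUpperTriangular)
    (hQU : Q = Lmat (m + 2) * U) :
    ∃ Dt, IsSignDiag Dt ∧ Q = Qmat (m + 2) * Dt := by
  have hQ' : Q * Qᵀ = 1 := mul_eq_one_comm.mp hQ
  have hR : (qhatFactor m * diagonal (qhatScale m)).IsUpperTriangular :=
    (isUpperTriangular_qhatFactor m).mul (blockTriangular_diagonal _)
  have hLQhat : ((Lmat (m + 2))ᵀ * Qhat (m + 2)).IsLowerTriangular := by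
    rw [Qhat_eq, ← Matrix.mul_assoc (Lmat _), ← Matrix.mul_assoc]
    exact (isLowerTriangular_Lmat_transpose_mul m).mul (blockTriangular_diagonal _)
  set X := (Qhat (m + 2))ᵀ * Q
  have hX : X = diagonal X.diag := (isDiag_transpose_mul_of_factors (Qhat_eq m) hQU hR hU hLQhat
    (isLowerTriangular_transpose_mul_of_orthogonal hQ hQU hU)).diagonal_diag.symm
  have hXX : X * Xᵀ = Dhat (m + 2) := by
    rw [transpose_mul, transpose_transpose, Matrix.mul_assoc, ← Matrix.mul_assoc Q, hQ',
      Matrix.one_mul, Qhat_transpose_mul_self]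
  have hsq (j) : X j j ^ 2 = Dhat (m + 2) j j := by
    rw [← hXX, hX, diagonal_transpose, diagonal_mul_diagonal, diagonal_apply_eq, diagonal_apply_eq,
      diag_apply, sq]
  have hDt : IsSignDiag (diagonal fun j ↦ X j j * (√(Dhat (m + 2) j j))⁻¹) := by
    refine isSignDiag_diagonal fun j ↦ sq_eq_one_iff.mp ?_
    rw [mul_pow, inv_pow, hsq, Real.sq_sqrt (Dhat_pos m j).le, mul_inv_cancel₀ (Dhat_pos m j).ne']
  have hQmat : Qmat (m + 2) = Q * diagonal fun j ↦ X j j * (√(Dhat (m + 2) j j))⁻¹ := by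
    have hQhat : Qhat (m + 2) = Q * X := by
      have hXT : Xᵀ = X := by rw [hX, diagonal_transpose]
      rw [← hXT, transpose_mul, transpose_transpose, ← Matrix.mul_assoc, hQ', Matrix.one_mul]
    rw [Qmat, hQhat, hX, Matrix.mul_assoc, diagonal_mul_diagonal]
    simp
  exact ⟨_, hDt, by rw [hQmat, Matrix.mul_assoc, hDt.mul_self, Matrix.mul_one]⟩

theorem exists_eq_mul_Qmat_mul_of_eq_mul_Lmat_mul (hQ : Qᵀ * Q = 1) (hS : IsSignDiag S)
    (hU : U.IsUpperTriangular) (hQU : Q = S * Lmat (m + 2) * S * U) :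
    ∃ Dt, IsSignDiag Dt ∧ Q = S * Qmat (m + 2) * Dt := by
  have hSQ : (S * Q)ᵀ * (S * Q) = 1 := by
    rw [transpose_mul, hS.transpose_eq, Matrix.mul_assoc, ← Matrix.mul_assoc S, hS.mul_self,
      Matrix.one_mul, hQ]
  have hSU : (S * U).IsUpperTriangular := by
    rw [hS.eq_diagonal]
    exact (blockTriangular_diagonal _).mul hU
  have hfactor : S * Q = Lmat (m + 2) * (S * U) := by
    simp only [hQU, ← Matrix.mul_assoc, hS.mul_self, Matrix.one_mul]
  obtain ⟨Dt, hDt, hSQ_eq⟩ := exists_eq_Qmat_mul_of_eq_Lmat_mul hSQ hSU hfactor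
  exact ⟨Dt, hDt, by rw [Matrix.mul_assoc, ← hSQ_eq, ← Matrix.mul_assoc, hS.mul_self,
    Matrix.one_mul]⟩

end Rigidity

section MaxGE

variable {n : ℕ}

theorem exists_abs_geEntry_eq_maxGE [Nonempty (Fin n)] (A : Matrix (Fin n) (Fin n) ℝ) :
    ∃ k i j : Fin n, k ≤ i ∧ |geEntry A k i j| = maxGE A := by
  obtain ⟨k, hk⟩ := exists_eq_ciSup_of_finite (f := fun k : Fin n ↦
    ⨆ i : {i : Fin n // k ≤ i}, ⨆ j : {j : Fin n // k ≤ j}, |geEntry A k i.1 j.1|)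
  have : Nonempty {i : Fin n // k ≤ i} := ⟨⟨k, le_rfl⟩⟩
  obtain ⟨i, hi⟩ := exists_eq_ciSup_of_finite (f := fun i : {i : Fin n // k ≤ i} ↦
    ⨆ j : {j : Fin n // k ≤ j}, |geEntry A k i.1 j.1|)
  obtain ⟨j, hj⟩ := exists_eq_ciSup_of_finite (f := fun j : {j : Fin n // k ≤ j} ↦
    |geEntry A k i.1 j.1|)
  exact ⟨k, i.1, j.1, i.2, hj.trans (hi.trans hk)⟩

theorem abs_geEntry_le_maxGE (A : Matrix (Fin n) (Fin n) ℝ) {k i j : Fin n} (hki : k ≤ i)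
    (hkj : k ≤ j) : |geEntry A k i j| ≤ maxGE A :=
  (le_ciSup (f := fun j : {j : Fin n // k ≤ j} ↦ |geEntry A k i j.1|)
    (Set.finite_range _).bddAbove ⟨j, hkj⟩).trans <|
  (le_ciSup (f := fun i : {i : Fin n // k ≤ i} ↦ ⨆ j : {j : Fin n // k ≤ j},
    |geEntry A k i.1 j.1|) (Set.finite_range _).bddAbove ⟨i, hki⟩).trans <|
  le_ciSup (f := fun k : Fin n ↦ ⨆ i : {i : Fin n // k ≤ i}, ⨆ j : {j : Fin n // k ≤ j},
    |geEntry A k i.1 j.1|) (Set.finite_range _).bddAbove k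

end MaxGE

section Bound

variable {m : ℕ} {Q D Dt : Matrix (Fin (m + 2)) (Fin (m + 2)) ℝ}

theorem two_mul_alpha_succ (j : ℕ) : 2 * alpha (j + 1) = (4 ^ (j + 1) + 2) / 3 := by
  rw [alpha_succ]
  ring

namespace IsPP

theorem maxGE_le (hPP : IsPP Q) (hQ : Q * Qᵀ = 1) : maxGE Q ≤ √(2 * alpha (m + 1)) := by
  obtain ⟨k, i, j, hki, hmax⟩ := exists_abs_geEntry_eq_maxGE Q
  rw [← hmax, two_mul_alpha_succ]
  refine Real.abs_le_sqrt ((hPP.geEntry_sq_le hQ hki j).trans ?_)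
  gcongr
  · norm_num
  · exact Nat.lt_succ_iff.mp k.isLt

/-- The bound `(4 ^ k + 2) / 3` increases strictly with the step, so only the last step can attain
the overall maximum. -/
theorem exists_geEntry_last_sq_eq (hPP : IsPP Q) (hQ : Q * Qᵀ = 1)
    (hmax : maxGE Q = √(2 * alpha (m + 1))) :
    ∃ j, geEntry Q (Fin.last _) (Fin.last _) j ^ 2 = (4 ^ (m + 1) + 2) / 3 := by
  obtain ⟨k, i, j, hki, hkij⟩ := exists_abs_geEntry_eq_maxGE Q
  have hsq : geEntry Q k i j ^ 2 = (4 ^ (m + 1) + 2) / 3 := by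
    rw [← sq_abs, hkij, hmax, two_mul_alpha_succ, Real.sq_sqrt (by positivity)]
  have hk : k = Fin.last (m + 1) := by
    have hpow : (4 : ℝ) ^ (m + 1) ≤ 4 ^ (k : ℕ) := by linarith [hPP.geEntry_sq_le hQ hki j]
    exact Fin.last_le_iff.mp ((pow_le_pow_iff_right₀ (by norm_num)).mp hpow)
  have hi : i = Fin.last (m + 1) := Fin.last_le_iff.mp (hk ▸ hki)
  exact ⟨j, by rwa [hk, hi] at hsq⟩

theorem exists_eq_mul_Qmat_mul (hPP : IsPP Q) (hQ : Qᵀ * Q = 1)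
    (hmax : maxGE Q = √(2 * alpha (m + 1))) :
    ∃ D Dt, IsSignDiag D ∧ IsSignDiag Dt ∧ Q = D * Qmat (m + 2) * Dt := by
  have hQ' : Q * Qᵀ = 1 := mul_eq_one_comm.mp hQ
  obtain ⟨j, hj⟩ := hPP.exists_geEntry_last_sq_eq hQ' hmax
  obtain ⟨S, hS, hL⟩ := hPP.exists_luLower_eq hQ' hj
  have hLU : Q = S * Lmat (m + 2) * S * luUpper Q := by
    rw [← hL, luLower_mul_luUpper (hPP.pivot_ne_zero (det_ne_zero_of_right_inverse hQ'))]
  obtain ⟨Dt, hDt, hQ_eq⟩ :=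
    exists_eq_mul_Qmat_mul_of_eq_mul_Lmat_mul hQ hS (isUpperTriangular_luUpper Q) hLU
  exact ⟨S, Dt, hS, hDt, hQ_eq⟩

theorem geEntry_last_mul_apply_last {n : ℕ} {Q : Matrix (Fin (n + 1)) (Fin (n + 1)) ℝ}
    (hPP : IsPP Q) (hQ : Q * Qᵀ = 1) :
    geEntry Q (Fin.last n) (Fin.last n) (Fin.last n) * Q (Fin.last n) (Fin.last n) = 1 := by
  have hLU := isPartialLU_of_pivot_ne_zero Q (Fin.last n) fun q _ ↦
    hPP.pivot_ne_zero (det_ne_zero_of_right_inverse hQ) q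
  have hzero (j) (hj : j ≠ Fin.last n) :
      geEntry Q (Fin.last n) (Fin.last n) j * Q (Fin.last n) j = 0 := by
    rw [hLU.geEntry_eq_zero (.inr (Fin.lt_last_iff_ne_last.mpr hj)), zero_mul]
  rw [← Fintype.sum_eq_single _ hzero, sum_geEntry_mul hQ le_rfl]

end IsPP

theorem Qmat_last_last (m : ℕ) :
    Qmat (m + 2) (Fin.last _) (Fin.last _) = (√(2 * alpha (m + 1)))⁻¹ := by
  rw [Qmat, mul_diagonal]
  simp [Qhat, Dhat]

theorem IsPP.sqrt_le_maxGE (hPP : IsPP Q) (hQ : Q * Qᵀ = 1) (hD : IsSignDiag D)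
    (hDt : IsSignDiag Dt) (hQ_eq : Q = D * Qmat (m + 2) * Dt) :
    √(2 * alpha (m + 1)) ≤ maxGE Q := by
  have hlast : |Q (Fin.last _) (Fin.last _)| = (√(2 * alpha (m + 1)))⁻¹ := by
    rw [hQ_eq, hD.mul_mul_apply hDt, abs_mul, abs_mul, hD.abs_apply_self, hDt.abs_apply_self,
      Qmat_last_last, one_mul, mul_one, abs_of_nonneg (by positivity)]
  have hpivot := congrArg abs (hPP.geEntry_last_mul_apply_last hQ)
  rw [abs_mul, abs_one, hlast] at hpivot
  rw [← eq_of_mul_inv_eq_one hpivot]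
  exact abs_geEntry_le_maxGE Q le_rfl le_rfl

end Bound

/-- for `n ≥ 3` and `Q ∈ O(n)` PP, the maximal GE intermediate entry of `Q`
is at most `√(2α_{n-1})`, with equality iff `Q = D Q_n D̃` for diagonal sign matrices
`D, D̃`. -/
theorem orth_max_pivot_bound (n : ℕ) (hn : 3 ≤ n) (Q : Matrix (Fin n) (Fin n) ℝ)
    (hQ : Qᵀ * Q = 1) (hPP : IsPP Q) :
    maxGE Q ≤ Real.sqrt (2 * alpha (n - 1)) ∧
    (maxGE Q = Real.sqrt (2 * alpha (n - 1)) ↔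
      ∃ D Dt : Matrix (Fin n) (Fin n) ℝ,
        IsSignDiag D ∧ IsSignDiag Dt ∧ Q = D * Qmat n * Dt) := by
  obtain ⟨m, rfl⟩ : ∃ m, n = m + 2 := ⟨n - 2, by lia⟩
  have hQ' : Q * Qᵀ = 1 := mul_eq_one_comm.mp hQ
  refine ⟨hPP.maxGE_le hQ', hPP.exists_eq_mul_Qmat_mul hQ, ?_⟩
  rintro ⟨D, Dt, hD, hDt, hQ_eq⟩
  exact (hPP.maxGE_le hQ').antisymm (hPP.sqrt_le_maxGE hQ' hD hDt hQ_eq)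
end

section
/- The map θ ↦ Q(θ), sending θ = (θ_{ij})_{1≤i<j≤n} ∈ ℝ^{n(n−1)/2} to the ordered product of Givens rotations Q(θ) = ∏_{i=1}^{n−1} ∏_{j=i+1}^{n} G(θ_{ij}, i, j), is √(n(n−1))-Lipschitz from (ℝ^{n(n−1)/2}, Euclidean norm) to (ℝ^{n×n}, Frobenius norm): for all θ, θ′, ‖Q(θ) − Q(θ′)‖_F ≤ √(n(n−1)) · ‖θ − θ′‖₂. Consequently, for any A ∈ ℝ^{n×n} with A ≠ 0 and any ε > 0, if ‖θ‖₂ ≤ ε / (√(n(n−1)) ‖A‖_F), then ‖A − Q(θ)A‖_F ≤ ε. -/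
open Matrix Filter

/-!
Multiplication by an orthogonal matrix preserves the Frobenius norm, so telescoping a difference of
two products of orthogonal matrices bounds it by the sum of the differences of the factors. Two
Givens rotations in the same plane differ by a matrix that acts on that plane as multiplication by
`e^{iθ} - e^{iθ'}` and vanishes elsewhere; its Frobenius norm is `√2 |e^{iθ} - e^{iθ'}|`, hence at
most `√2 |θ - θ'|`. By Cauchy–Schwarz over the `n(n-1)/2` factors the constant is
`√2 · √(n(n-1)/2) = √(n(n-1))`. The perturbation bound compares `Q(θ)` with `Q(0) = 1`.
-/

open scoped Matrix.Norms.Frobenius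

section UnitaryGroup

variable {m n 𝕜 : Type*} [Fintype m] [Fintype n] [RCLike 𝕜]

theorem frobenius_norm_sq_eq_re_trace (A : Matrix m n 𝕜) :
    ‖A‖ ^ 2 = RCLike.re (Aᴴ * A).trace := by
  rw [frobenius_norm_def, ← Real.sqrt_eq_rpow, Real.sq_sqrt (by positivity), Finset.sum_comm]
  simp_rw [trace, diag_apply, mul_apply, conjTranspose_apply, RCLike.star_def, RCLike.conj_mul,
    map_sum, ← RCLike.ofReal_pow, RCLike.ofReal_re, Real.rpow_ofNat]

variable [DecidableEq m]

theorem frobenius_norm_unitary_mul {U : Matrix m m 𝕜} (hU : U ∈ unitaryGroup m 𝕜)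
    (A : Matrix m n 𝕜) : ‖U * A‖ = ‖A‖ := by
  rw [← sq_eq_sq₀ (norm_nonneg _) (norm_nonneg _), frobenius_norm_sq_eq_re_trace,
    frobenius_norm_sq_eq_re_trace, conjTranspose_mul, Matrix.mul_assoc, ← Matrix.mul_assoc Uᴴ,
    ← star_eq_conjTranspose U, mem_unitaryGroup_iff'.mp hU, Matrix.one_mul]

theorem frobenius_norm_mul_unitary {U : Matrix m m 𝕜} (hU : U ∈ unitaryGroup m 𝕜)
    (A : Matrix n m 𝕜) : ‖A * U‖ = ‖A‖ := by
  rw [← frobenius_norm_conjTranspose, conjTranspose_mul, ← star_eq_conjTranspose U,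
    frobenius_norm_unitary_mul (Unitary.star_mem hU), frobenius_norm_conjTranspose]

theorem frobenius_norm_list_prod_sub_list_prod_le {α : Type*} (l : List α)
    (f g : α → Matrix m m 𝕜) (hf : ∀ a ∈ l, f a ∈ unitaryGroup m 𝕜)
    (hg : ∀ a ∈ l, g a ∈ unitaryGroup m 𝕜) :
    ‖(l.map f).prod - (l.map g).prod‖ ≤ (l.map fun a => ‖f a - g a‖).sum := by
  induction l with
  | nil => simp
  | cons a l ih =>
    simp only [List.forall_mem_cons] at hf hg
    simp only [List.map_cons, List.prod_cons, List.sum_cons]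
    set F := (l.map f).prod
    set G := (l.map g).prod
    have hG : G ∈ unitaryGroup m 𝕜 := list_prod_mem (List.forall_mem_map.mpr hg.2)
    calc ‖f a * F - g a * G‖
        = ‖(f a - g a) * G + f a * (F - G)‖ := by congr 1; noncomm_ring
      _ ≤ ‖(f a - g a) * G‖ + ‖f a * (F - G)‖ := norm_add_le _ _
      _ = ‖f a - g a‖ + ‖F - G‖ := by
        rw [frobenius_norm_mul_unitary hG, frobenius_norm_unitary_mul hf.1]
      _ ≤ ‖f a - g a‖ + (l.map fun a => ‖f a - g a‖).sum := by gcongr; exact ih hf.2 hg.2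

end UnitaryGroup

section PlaneMatrix

variable {ι R : Type*} [DecidableEq ι] [CommRing R]

/-- The matrix acting on the coordinate plane of `i` and `j` as multiplication by the complex
number `x + y√-1`, and as zero on the other coordinates. In these terms the Givens rotation is
`1 + planeMatrix i j (cos θ - 1) (sin θ)`. -/
def planeMatrix (i j : ι) (x y : R) : Matrix ι ι R :=
  x • (single i i 1 + single j j 1) + y • (single j i 1 - single i j 1)

theorem planeMatrix_zero (i j : ι) : planeMatrix i j (0 : R) 0 = 0 := by
  simp [planeMatrix]

theorem planeMatrix_add (i j : ι) (x y x' y' : R) :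
    planeMatrix i j x y + planeMatrix i j x' y' = planeMatrix i j (x + x') (y + y') := by
  unfold planeMatrix
  module

theorem planeMatrix_sub (i j : ι) (x y x' y' : R) :
    planeMatrix i j x y - planeMatrix i j x' y' = planeMatrix i j (x - x') (y - y') := by
  unfold planeMatrix
  module

theorem transpose_planeMatrix (i j : ι) (x y : R) :
    (planeMatrix i j x y)ᵀ = planeMatrix i j x (-y) := by
  simp only [planeMatrix, transpose_add, transpose_sub, transpose_smul, transpose_single]
  module

variable [Fintype ι] {i j : ι}

theorem planeMatrix_mul (hij : i ≠ j) (x y x' y' : R) :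
    planeMatrix i j x y * planeMatrix i j x' y' =
      planeMatrix i j (x * x' - y * y') (x * y' + y * x') := by
  simp only [planeMatrix, Matrix.add_mul, Matrix.mul_add, Matrix.sub_mul, Matrix.mul_sub,
    Matrix.smul_mul, Matrix.mul_smul, single_mul_single_same, single_mul_single_of_ne _ _ _ _ hij,
    single_mul_single_of_ne _ _ _ _ hij.symm, mul_one]
  module

theorem one_add_planeMatrix_mem_orthogonalGroup (hij : i ≠ j) {x y : R}
    (hxy : (1 + x) ^ 2 + y ^ 2 = 1) : 1 + planeMatrix i j x y ∈ orthogonalGroup ι R := by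
  have hcancel : planeMatrix i j x (-y) + planeMatrix i j x y +
      planeMatrix i j x (-y) * planeMatrix i j x y = 0 := by
    rw [planeMatrix_mul hij, planeMatrix_add, planeMatrix_add, ← planeMatrix_zero i j]
    congr 1
    · linear_combination hxy
    · ring
  rw [mem_orthogonalGroup_iff']
  calc (1 + planeMatrix i j x y)ᵀ * (1 + planeMatrix i j x y)
      = (1 + planeMatrix i j x (-y)) * (1 + planeMatrix i j x y) := by
        rw [transpose_add, transpose_one, transpose_planeMatrix]
    _ = 1 + (planeMatrix i j x (-y) + planeMatrix i j x y +
          planeMatrix i j x (-y) * planeMatrix i j x y) := by noncomm_ring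
    _ = 1 := by rw [hcancel, add_zero]

theorem trace_planeMatrix (hij : i ≠ j) (x y : R) : (planeMatrix i j x y).trace = 2 * x := by
  rw [planeMatrix, trace_add, trace_smul, trace_smul, trace_add, trace_sub, trace_single_eq_same,
    trace_single_eq_same, trace_single_eq_of_ne _ _ _ hij, trace_single_eq_of_ne _ _ _ hij.symm,
    smul_eq_mul, smul_eq_mul]
  ring

theorem frobenius_norm_planeMatrix (hij : i ≠ j) (x y : ℝ) :
    ‖planeMatrix i j x y‖ = √2 * √(x ^ 2 + y ^ 2) := by
  rw [← Real.sqrt_mul zero_le_two, eq_comm, Real.sqrt_eq_iff_eq_sq (by positivity) (norm_nonneg _),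
    frobenius_norm_sq_eq_re_trace, conjTranspose_eq_transpose_of_trivial, transpose_planeMatrix,
    planeMatrix_mul hij, trace_planeMatrix hij, RCLike.re_to_real]
  ring

end PlaneMatrix

theorem sq_cos_sub_cos_add_sq_sin_sub_sin_le (x y : ℝ) :
    (Real.cos x - Real.cos y) ^ 2 + (Real.sin x - Real.sin y) ^ 2 ≤ (x - y) ^ 2 := by
  have hcos := Real.one_sub_sq_div_two_le_cos (x := x - y)
  rw [Real.cos_sub] at hcos
  linarith [Real.sin_sq_add_cos_sq x, Real.sin_sq_add_cos_sq y]

section Givens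

variable {n : ℕ} {i j : Fin n}

theorem givens_eq_one_add_planeMatrix (hij : i ≠ j) (θ : ℝ) :
    givens n θ i j = 1 + planeMatrix i j (Real.cos θ - 1) (Real.sin θ) := by
  ext a b
  simp only [givens, planeMatrix, Matrix.add_apply, Matrix.smul_apply, Matrix.sub_apply,
    single_apply, one_apply, smul_eq_mul]
  grind

theorem givens_zero (hij : i ≠ j) : givens n 0 i j = 1 := by
  simp [givens_eq_one_add_planeMatrix hij, planeMatrix_zero]

theorem givens_mem_orthogonalGroup (hij : i ≠ j) (θ : ℝ) :
    givens n θ i j ∈ orthogonalGroup (Fin n) ℝ := by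
  rw [givens_eq_one_add_planeMatrix hij]
  apply one_add_planeMatrix_mem_orthogonalGroup hij
  rw [add_sub_cancel, Real.cos_sq_add_sin_sq]

theorem frobenius_norm_givens_sub_givens_le (hij : i ≠ j) (θ θ' : ℝ) :
    ‖givens n θ i j - givens n θ' i j‖ ≤ √2 * |θ - θ'| := by
  rw [givens_eq_one_add_planeMatrix hij, givens_eq_one_add_planeMatrix hij, add_sub_add_left_eq_sub,
    planeMatrix_sub, sub_sub_sub_cancel_right, frobenius_norm_planeMatrix hij,
    ← Real.sqrt_sq_eq_abs]
  gcongr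
  exact sq_cos_sub_cos_add_sq_sin_sub_sin_le θ θ'

end Givens

section QofTheta

/-- The pairs `i < j` in lexicographic order, which is the order of the factors of `Q(θ)`. -/
def lexPairs (n : ℕ) : List (Fin n × Fin n) :=
  (List.finRange n ×ˢ List.finRange n).filter fun p => p.1 < p.2

variable {n : ℕ}

theorem mem_lexPairs {p : Fin n × Fin n} : p ∈ lexPairs n ↔ p.1 < p.2 := by
  simp [lexPairs, List.mem_product (a := p.1) (b := p.2)]

theorem sum_map_lexPairs {M : Type*} [AddCommMonoid M] (f : Fin n × Fin n → M) :
    ((lexPairs n).map f).sum = ∑ p with p.1 < p.2, f p := by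
  have hnodup : (lexPairs n).Nodup :=
    ((List.nodup_finRange n).product (List.nodup_finRange n)).filter _
  rw [← List.sum_toFinset f hnodup]
  congr 1
  ext p
  simp [mem_lexPairs]

theorem QofTheta_eq_prod_lexPairs (θ : Fin n → Fin n → ℝ) :
    QofTheta n θ = ((lexPairs n).map fun p => givens n (θ p.1 p.2) p.1 p.2).prod := by
  simp [QofTheta, lexPairs, SProd.sprod, List.product, List.filter_map, List.flatMap,
    List.prod_flatten, Function.comp_def]

theorem QofTheta_zero : QofTheta n 0 = 1 := by
  rw [QofTheta_eq_prod_lexPairs]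
  refine List.prod_eq_one (List.forall_mem_map.mpr fun p hp => ?_)
  exact givens_zero (mem_lexPairs.mp hp).ne

theorem frobenius_norm_QofTheta_sub_QofTheta_le_sum (θ θ' : Fin n → Fin n → ℝ) :
    ‖QofTheta n θ - QofTheta n θ'‖ ≤
      ∑ p : Fin n × Fin n with p.1 < p.2, √2 * |θ p.1 p.2 - θ' p.1 p.2| := by
  have horth (τ : Fin n → Fin n → ℝ) :
      ∀ p ∈ lexPairs n, givens n (τ p.1 p.2) p.1 p.2 ∈ orthogonalGroup (Fin n) ℝ :=
    fun p hp => givens_mem_orthogonalGroup (mem_lexPairs.mp hp).ne _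
  rw [QofTheta_eq_prod_lexPairs, QofTheta_eq_prod_lexPairs]
  refine (frobenius_norm_list_prod_sub_list_prod_le _ _ _ (horth θ) (horth θ')).trans ?_
  rw [sum_map_lexPairs]
  refine Finset.sum_le_sum fun p hp => ?_
  exact frobenius_norm_givens_sub_givens_le (Finset.mem_filter.mp hp).2.ne _ _

theorem frobenius_norm_QofTheta_sub_QofTheta_le (θ θ' : Fin n → Fin n → ℝ) :
    ‖QofTheta n θ - QofTheta n θ'‖ ≤
      √(n * (n - 1)) * √(∑ i, ∑ j, if i < j then (θ i j - θ' i j) ^ 2 else 0) := by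
  have hcard : ∑ p : Fin n × Fin n with p.1 < p.2, √2 ^ 2 = (n * (n - 1) : ℝ) := by
    simp [Fintype.card_product_filter_lt, Nat.cast_choose_two]
  calc ‖QofTheta n θ - QofTheta n θ'‖
      ≤ ∑ p : Fin n × Fin n with p.1 < p.2, √2 * |θ p.1 p.2 - θ' p.1 p.2| :=
        frobenius_norm_QofTheta_sub_QofTheta_le_sum θ θ'
    _ ≤ √(∑ p : Fin n × Fin n with p.1 < p.2, √2 ^ 2) *
          √(∑ p : Fin n × Fin n with p.1 < p.2, |θ p.1 p.2 - θ' p.1 p.2| ^ 2) :=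
        Real.sum_mul_le_sqrt_mul_sqrt _ _ _
    _ = √(n * (n - 1)) * √(∑ i, ∑ j, if i < j then (θ i j - θ' i j) ^ 2 else 0) := by
        simp only [hcard, sq_abs, Finset.sum_filter, Fintype.sum_prod_type]

end QofTheta

theorem frobNorm_eq_frobenius_norm {n : ℕ} (A : Matrix (Fin n) (Fin n) ℝ) : frobNorm A = ‖A‖ := by
  simp [frobNorm, frobenius_norm_def, Real.sqrt_eq_rpow]

theorem QofTheta_lipschitz_general (n : ℕ) {m : Type*} [Fintype m] :
    (∀ θ θ' : Fin n → Fin n → ℝ, ‖QofTheta n θ - QofTheta n θ'‖ ≤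
      √(n * (n - 1)) * √(∑ i, ∑ j, if i < j then (θ i j - θ' i j) ^ 2 else 0)) ∧
    ∀ (A : Matrix (Fin n) m ℝ) (θ : Fin n → Fin n → ℝ), ‖A - QofTheta n θ * A‖ ≤
      √(∑ i, ∑ j, if i < j then θ i j ^ 2 else 0) * (√(n * (n - 1)) * ‖A‖) := by
  refine ⟨frobenius_norm_QofTheta_sub_QofTheta_le, fun A θ => ?_⟩
  calc ‖A - QofTheta n θ * A‖
      = ‖(QofTheta n 0 - QofTheta n θ) * A‖ := by
        rw [QofTheta_zero, Matrix.sub_mul, Matrix.one_mul]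
    _ ≤ ‖QofTheta n 0 - QofTheta n θ‖ * ‖A‖ := frobenius_norm_mul _ _
    _ ≤ √(n * (n - 1)) * √(∑ i, ∑ j, if i < j then (0 - θ i j) ^ 2 else 0) * ‖A‖ := by
        gcongr
        exact frobenius_norm_QofTheta_sub_QofTheta_le 0 θ
    _ = √(∑ i, ∑ j, if i < j then θ i j ^ 2 else 0) * (√(n * (n - 1)) * ‖A‖) := by
        simp only [zero_sub, neg_sq]
        ring

/-- the map `θ ↦ Q(θ)` is `√(n(n-1))`-Lipschitz (Euclidean to Frobenius norm);
consequently `‖θ‖₂ ≤ ε/(√(n(n-1)) ‖A‖_F)` implies `‖A - Q(θ)A‖_F ≤ ε`. -/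
theorem QofTheta_lipschitz (n : ℕ) :
    (∀ θ θ' : Fin n → Fin n → ℝ,
      frobNorm (QofTheta n θ - QofTheta n θ') ≤
        Real.sqrt ((n : ℝ) * ((n : ℝ) - 1)) *
          Real.sqrt (∑ i, ∑ j, if i < j then (θ i j - θ' i j) ^ 2 else 0)) ∧
    (∀ A : Matrix (Fin n) (Fin n) ℝ, A ≠ 0 → ∀ ε : ℝ, 0 < ε →
      ∀ θ : Fin n → Fin n → ℝ,
        Real.sqrt (∑ i, ∑ j, if i < j then (θ i j) ^ 2 else 0) ≤
          ε / (Real.sqrt ((n : ℝ) * ((n : ℝ) - 1)) * frobNorm A) →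
        frobNorm (A - QofTheta n θ * A) ≤ ε) := by
  simp only [frobNorm_eq_frobenius_norm]
  obtain ⟨hlip, hmul⟩ := QofTheta_lipschitz_general n (m := Fin n)
  exact ⟨hlip, fun A _ ε hε θ hθ =>
    (hmul A θ).trans (mul_le_of_le_div₀ hε.le (by positivity) hθ)⟩
end
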